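/- (Reweighting identity for the missingness-adjusted weights.) Fix a path d = (d1,d2) in {0,1}^2 with P(D = d) > 0. Suppose Assumption MAR holds, let φ_{d2} be a measurable (0,1]-valued function of X, and suppose (S/φ_{d2}(X)) · 1{D = d} · ΔY and (S/φ_{d2}(X)) · 1{D = d} are integrable. Then E[(S/φ_{d2}(X)) · 1{D = d} · ΔY] = E[(q_{d2}(X)/φ_{d2}(X)) · p_d(X) · m_d(X)] and E[(S/φ_{d2}(X)) · 1{D = d}] = E[(q_{d2}(X)/φ_{d2}(X)) · p_d(X)], with the convention p_d(X) · m_d(X) := 0 on {p_d(X) = 0}. -/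

import Mathlib

open MeasureTheory Set
open scoped Classical

noncomputable section

namespace DIDMissing

variable {Ω : Type*} {𝓧 : Type*}

/-- Real-valued indicator of a set. -/
def ind (A : Set Ω) : Ω → ℝ := A.indicator fun _ => (1 : ℝ)

/-- All treatment paths `{0,1}²` (coded as reals). -/
def allPaths : Set (ℝ × ℝ) := {(0, 0), (0, 1), (1, 0), (1, 1)}

/-- The three treated paths `{(1,1), (0,1), (1,0)}`. -/
def threePaths : Set (ℝ × ℝ) := {(1, 1), (0, 1), (1, 0)}

/-- The event `{D = d}` for a treatment path `d = (d₁, d₂)`. -/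
def evD (D1 D2 : Ω → ℝ) (d : ℝ × ℝ) : Set Ω := {ω | D1 ω = d.1 ∧ D2 ω = d.2}

/-- The event `{D₂ = b}`. -/
def evD2 (D2 : Ω → ℝ) (b : ℝ) : Set Ω := {ω | D2 ω = b}

/-- `g` is a (measurable-in-the-covariate) version of the conditional mean `E[Z ∣ A, X]`:
for every bounded measurable `h`, `E[1_A · Z · h(X)] = E[1_A · g(X) · h(X)]`. -/
def IsCondMeanGiven [MeasurableSpace Ω] [MeasurableSpace 𝓧] (P : Measure Ω) (X : Ω → 𝓧)
    (A : Set Ω) (Z : Ω → ℝ) (g : 𝓧 → ℝ) : Prop :=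
  Measurable g ∧
    ∀ h : 𝓧 → ℝ, Measurable h → (∃ C, ∀ x, |h x| ≤ C) →
      ∫ ω, ind A ω * Z ω * h (X ω) ∂P = ∫ ω, ind A ω * g (X ω) * h (X ω) ∂P

/-- Assumption DID for a path `d` relative to `d' = (0,0)`:
(i) no anticipation, `E[Y₀(d) ∣ D = d, X] = E[Y₀(0,0) ∣ D = d, X]` a.s., stated in the
version-free integral form; and (ii) conditional parallel trends, stated as the existence
of a common version of `E[Y₂(0,0) − Y₀(0,0) ∣ X]` and `E[Y₂(0,0) − Y₀(0,0) ∣ D = d, X]`. -/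
def DID [MeasurableSpace Ω] [MeasurableSpace 𝓧] (P : Measure Ω) (X : Ω → 𝓧)
    (D1 D2 : Ω → ℝ) (Y0p Y2p : ℝ × ℝ → Ω → ℝ) (d : ℝ × ℝ) : Prop :=
  (∀ h : 𝓧 → ℝ, Measurable h → (∃ C, ∀ x, |h x| ≤ C) →
      ∫ ω, ind (evD D1 D2 d) ω * Y0p d ω * h (X ω) ∂P
        = ∫ ω, ind (evD D1 D2 d) ω * Y0p (0, 0) ω * h (X ω) ∂P) ∧
  (∃ tr : 𝓧 → ℝ,
      IsCondMeanGiven P X Set.univ (fun ω => Y2p (0, 0) ω - Y0p (0, 0) ω) tr ∧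
      IsCondMeanGiven P X (evD D1 D2 d) (fun ω => Y2p (0, 0) ω - Y0p (0, 0) ω) tr)

/-- Assumption MAR: `S ⟂ (D₁, ΔY) ∣ (D₂, X)`, where `q d₂` is a version of the
missing-data probability `P(S = 1 ∣ D₂ = d₂, X)`, which is `(0,1]`-valued a.s. -/
def MAR [MeasurableSpace Ω] [MeasurableSpace 𝓧] (P : Measure Ω) (X : Ω → 𝓧)
    (D1 D2 S Y0 Y2 : Ω → ℝ) (q : ℝ → 𝓧 → ℝ) : Prop :=
  (∀ d2 ∈ ({0, 1} : Set ℝ), IsCondMeanGiven P X (evD2 D2 d2) S (q d2)) ∧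
  (∀ d2 ∈ ({0, 1} : Set ℝ), ∀ᵐ ω ∂P, 0 < q d2 (X ω) ∧ q d2 (X ω) ≤ 1) ∧
  (∀ d2 ∈ ({0, 1} : Set ℝ), ∀ f : ℝ × ℝ → ℝ, Measurable f → (∃ C, ∀ p, |f p| ≤ C) →
      ∀ h : 𝓧 → ℝ, Measurable h → (∃ C, ∀ x, |h x| ≤ C) →
        ∫ ω, ind (evD2 D2 d2) ω * S ω * f (D1 ω, Y2 ω - Y0 ω) * h (X ω) ∂P
          = ∫ ω, ind (evD2 D2 d2) ω * q d2 (X ω) * f (D1 ω, Y2 ω - Y0 ω) * h (X ω) ∂P)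

/-- The path-dependent ATT `τ_{d,(0,0)} = E[Y₂(d) − Y₂(0,0) ∣ D = d]`. -/
def tau [MeasurableSpace Ω] (P : Measure Ω) (D1 D2 : Ω → ℝ)
    (Y2p : ℝ × ℝ → Ω → ℝ) (d : ℝ × ℝ) : ℝ :=
  (P (evD D1 D2 d)).toReal⁻¹ * ∫ ω in evD D1 D2 d, (Y2p d ω - Y2p (0, 0) ω) ∂P

theorem core_lim [MeasurableSpace Ω] (P : Measure Ω) (F G : Ω → ℝ) (B : ℕ → Set Ω)
    (hF : Integrable F P) (hB : AECover P Filter.atTop B)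
    (hG : ∀ n, IntegrableOn G (B n) P)
    (heq : ∀ n, ∫ ω in B n, F ω ∂P = ∫ ω in B n, G ω ∂P)
    (hT : ∀ n, ∃ T : Ω → ℝ, (∀ ω, ‖T ω‖ ≤ ‖F ω‖) ∧ ∫ ω in B n, ‖G ω‖ ∂P = ∫ ω, T ω ∂P) :
    Integrable G P ∧ ∫ ω, F ω ∂P = ∫ ω, G ω ∂P := by
  have hGi : Integrable G P := by
    refine hB.integrable_of_integral_norm_bounded (∫ ω, ‖F ω‖ ∂P) hG (Filter.Eventually.of_forall ?_)
    intro n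
    obtain ⟨T, hT1, hT2⟩ := hT n
    rw [hT2]
    exact (Real.le_norm_self _).trans
      (norm_integral_le_of_norm_le hF.norm (Filter.Eventually.of_forall hT1))
  refine ⟨hGi, ?_⟩
  have h1 := hB.integral_tendsto_of_countably_generated hF
  have h2 := hB.integral_tendsto_of_countably_generated hGi
  simp_rw [heq] at h1
  exact tendsto_nhds_unique h1 h2

theorem cover_two [MeasurableSpace Ω] (P : Measure Ω) (a b : Ω → ℝ)
    (ha : Measurable a) (hb : Measurable b) :
    AECover P Filter.atTop (fun n : ℕ => {ω | |a ω| ≤ n ∧ |b ω| ≤ n}) where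
  ae_eventually_mem := by
    refine Filter.Eventually.of_forall fun ω => ?_
    obtain ⟨N, hN⟩ := exists_nat_ge (max |a ω| |b ω|)
    filter_upwards [Filter.eventually_ge_atTop N] with n hn
    have : (N : ℝ) ≤ n := by exact_mod_cast hn
    exact ⟨(le_max_left _ _).trans (hN.trans this), (le_max_right _ _).trans (hN.trans this)⟩
  measurableSet := fun n =>
    (measurableSet_le ha.abs measurable_const).inter (measurableSet_le hb.abs measurable_const)

theorem ind_meas [MeasurableSpace Ω] {A : Set Ω} (hA : MeasurableSet A) : Measurable (ind A) :=
  measurable_const.indicator hA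

theorem ind_cases (A : Set Ω) (ω : Ω) : ind A ω = 0 ∨ ind A ω = 1 := by
  unfold ind
  by_cases h : ω ∈ A <;> simp [h]

theorem condMean_ext [MeasurableSpace Ω] [MeasurableSpace 𝓧]
    (P : Measure Ω) [IsProbabilityMeasure P] (X : Ω → 𝓧) (hX : Measurable X)
    (A : Set Ω) (hA : MeasurableSet A) (Z : Ω → ℝ) (g h : 𝓧 → ℝ)
    (hg : IsCondMeanGiven P X A Z g) (hh : Measurable h)
    (hi : Integrable (fun ω => ind A ω * Z ω * h (X ω)) P) :
    Integrable (fun ω => ind A ω * g (X ω) * h (X ω)) P ∧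
    ∫ ω, ind A ω * Z ω * h (X ω) ∂P = ∫ ω, ind A ω * g (X ω) * h (X ω) ∂P := by
  obtain ⟨hgm, hg⟩ := hg
  have hB := cover_two P (fun ω => g (X ω)) (fun ω => h (X ω)) (hgm.comp hX) (hh.comp hX)
  have hE : ∀ n : ℕ, MeasurableSet {x | |g x| ≤ n ∧ |h x| ≤ n} := fun n =>
    (measurableSet_le hgm.abs measurable_const).inter (measurableSet_le hh.abs measurable_const)
  refine core_lim P _ _ _ hi hB ?_ ?_ ?_
  · intro n
    refine Measure.integrableOn_of_bounded (M := n * n) (measure_ne_top _ _)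
      (((ind_meas hA).mul (hgm.comp hX)).mul (hh.comp hX)).aestronglyMeasurable ?_
    refine (ae_restrict_iff' (hB.measurableSet n)).2 (Filter.Eventually.of_forall ?_)
    rintro ω ⟨h1, h2⟩
    rw [Real.norm_eq_abs, abs_mul, abs_mul]
    refine mul_le_mul ?_ h2 (abs_nonneg _) (Nat.cast_nonneg _)
    rcases ind_cases A ω with h0 | h0 <;> rw [h0] <;> simp [h1]
  · intro n
    rw [← integral_indicator (hB.measurableSet n), ← integral_indicator (hB.measurableSet n)]
    have := hg ({x | |g x| ≤ n ∧ |h x| ≤ n}.indicator h) (hh.indicator (hE n))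
      ⟨n, fun x => by
        by_cases hx : x ∈ {x | |g x| ≤ n ∧ |h x| ≤ n}
        · rw [indicator_of_mem hx]; exact hx.2
        · rw [indicator_of_notMem hx]; simp⟩
    convert this using 2
    all_goals
      ext ω
      by_cases hx : |g (X ω)| ≤ n ∧ |h (X ω)| ≤ n <;> simp [indicator, hx]
  · intro n
    have hsm : Measurable (fun x => if 0 ≤ g x then |h x| else -|h x|) :=
      Measurable.ite (measurableSet_le measurable_const hgm) hh.abs hh.abs.neg
    have := hg ({x | |g x| ≤ n ∧ |h x| ≤ n}.indicator
        (fun x => if 0 ≤ g x then |h x| else -|h x|)) (hsm.indicator (hE n))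
      ⟨n, fun x => by
        by_cases hx : x ∈ {x | |g x| ≤ n ∧ |h x| ≤ n}
        · rw [indicator_of_mem hx]
          have := hx.2
          split_ifs <;> simpa using this
        · rw [indicator_of_notMem hx]; simp⟩
    refine ⟨_, ?_, Eq.trans ?_ this.symm⟩
    · intro ω
      rw [norm_mul, norm_mul (ind A ω * Z ω)]
      refine mul_le_mul_of_nonneg_left ?_ (norm_nonneg _)
      by_cases hx : X ω ∈ {x | |g x| ≤ n ∧ |h x| ≤ n}
      · rw [indicator_of_mem hx]
        split_ifs <;> simp
      · rw [indicator_of_notMem hx]; simp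
    · rw [← integral_indicator (hB.measurableSet n)]
      congr 1
      ext ω
      by_cases hx : |g (X ω)| ≤ n ∧ |h (X ω)| ≤ n
      · simp only [indicator, mem_ofPred_eq, hx, and_self, if_true, Real.norm_eq_abs, abs_mul]
        have h1 : |ind A ω| = ind A ω := by
          rcases ind_cases A ω with h0 | h0 <;> rw [h0] <;> simp
        rw [h1]
        split_ifs with h2
        · rw [abs_of_nonneg h2]
        · rw [abs_of_neg (not_le.1 h2)]; ring
      · simp [indicator, hx]

theorem mar_ext [MeasurableSpace Ω] [MeasurableSpace 𝓧]
    (P : Measure Ω) [IsProbabilityMeasure P] (X : Ω → 𝓧) (hX : Measurable X)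
    (Y0 Y2 D1 D2 S : Ω → ℝ)
    (hY0 : Measurable Y0) (hY2 : Measurable Y2)
    (hD1 : Measurable D1) (hD2 : Measurable D2)
    (d : ℝ × ℝ) (hd : d.2 ∈ ({0, 1} : Set ℝ))
    (q : ℝ → 𝓧 → ℝ) (hMAR : MAR P X D1 D2 S Y0 Y2 q)
    (k : 𝓧 → ℝ) (hk : Measurable k) (hk0 : ∀ x, 0 ≤ k x)
    (u : ℝ → ℝ) (hu : Measurable u)
    (hSv : ∀ ω, S ω = 0 ∨ S ω = 1)
    (hi : Integrable (fun ω => ind (evD D1 D2 d) ω * S ω * u (Y2 ω - Y0 ω) * k (X ω)) P) :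
    Integrable (fun ω => ind (evD D1 D2 d) ω * q d.2 (X ω) * u (Y2 ω - Y0 ω) * k (X ω)) P ∧
    ∫ ω, ind (evD D1 D2 d) ω * S ω * u (Y2 ω - Y0 ω) * k (X ω) ∂P
      = ∫ ω, ind (evD D1 D2 d) ω * q d.2 (X ω) * u (Y2 ω - Y0 ω) * k (X ω) ∂P := by
  obtain ⟨hq, hq1, hM⟩ := hMAR
  have hqm := (hq d.2 hd).1
  have hq1 := hq1 d.2 hd
  have hM := hM d.2 hd
  have hA : MeasurableSet (evD D1 D2 d) :=
    (hD1 (measurableSet_singleton d.1)).inter (hD2 (measurableSet_singleton d.2))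
  have hum : Measurable (fun ω => u (Y2 ω - Y0 ω)) := hu.comp (hY2.sub hY0)
  have hB := cover_two P (fun ω => u (Y2 ω - Y0 ω)) (fun ω => k (X ω)) hum (hk.comp hX)
  have key : ∀ (n : ℕ) (v : ℝ → ℝ), Measurable v → (∀ y, |v y| = |u y|) →
      ∫ ω in {ω | |u (Y2 ω - Y0 ω)| ≤ n ∧ |k (X ω)| ≤ n},
        ind (evD D1 D2 d) ω * S ω * v (Y2 ω - Y0 ω) * k (X ω) ∂P =
      ∫ ω in {ω | |u (Y2 ω - Y0 ω)| ≤ n ∧ |k (X ω)| ≤ n},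
        ind (evD D1 D2 d) ω * q d.2 (X ω) * v (Y2 ω - Y0 ω) * k (X ω) ∂P := by
    intro n v hv hvu
    have hBm := hB.measurableSet n
    rw [← integral_indicator hBm, ← integral_indicator hBm]
    have := hM (fun p => if p.1 = d.1 ∧ |u p.2| ≤ n then v p.2 else 0)
      (Measurable.ite ((measurable_fst (measurableSet_singleton d.1)).inter
        (measurableSet_le (hu.comp measurable_snd).abs measurable_const))
        (hv.comp measurable_snd) measurable_const)
      ⟨n, fun p => by
        split_ifs with h
        · rw [hvu]; exact h.2
        · simp⟩
      (fun x => if |k x| ≤ n then k x else 0)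
      (Measurable.ite (measurableSet_le hk.abs measurable_const) hk measurable_const)
      ⟨n, fun x => by
        split_ifs with h
        · exact h
        · simp⟩
    convert this using 2
    all_goals
      ext ω
      by_cases h1 : D1 ω = d.1 <;> by_cases h2 : D2 ω = d.2 <;>
      by_cases h3 : |u (Y2 ω - Y0 ω)| ≤ n <;> by_cases h4 : |k (X ω)| ≤ n <;>
      simp [indicator, ind, evD, evD2, h1, h2, h3, h4]
  refine core_lim P _ _ _ hi hB ?_ (fun n => key n u hu fun _ => rfl) ?_
  · intro n
    refine Measure.integrableOn_of_bounded (M := n * n) (measure_ne_top _ _)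
      ((((ind_meas hA).mul (hqm.comp hX)).mul hum).mul (hk.comp hX)).aestronglyMeasurable ?_
    refine (ae_restrict_iff' (hB.measurableSet n)).2 ?_
    filter_upwards [hq1] with ω hω
    rintro ⟨h1, h2⟩
    rw [Real.norm_eq_abs, abs_mul, abs_mul]
    refine mul_le_mul ?_ h2 (abs_nonneg _) (Nat.cast_nonneg _)
    have h3 : |ind (evD D1 D2 d) ω * q d.2 (X ω)| ≤ 1 := by
      rcases ind_cases (evD D1 D2 d) ω with h0 | h0 <;> rw [h0]
      · simp
      · rw [one_mul, abs_of_pos hω.1]; exact hω.2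
    calc _ ≤ 1 * (n : ℝ) := mul_le_mul h3 h1 (abs_nonneg _) zero_le_one
      _ = n := one_mul _
  · intro n
    have hBm := hB.measurableSet n
    have := key n (fun y => |u y|) hu.abs (fun y => abs_abs _)
    rw [← integral_indicator hBm (f := fun ω =>
      ind (evD D1 D2 d) ω * S ω * |u (Y2 ω - Y0 ω)| * k (X ω))] at this
    refine ⟨_, ?_, Eq.trans ?_ this.symm⟩
    · intro ω
      refine (norm_indicator_le_norm_self _ _).trans (le_of_eq ?_)
      simp [abs_mul]
    · refine integral_congr_ae (ae_restrict_of_ae ?_)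
      filter_upwards [hq1] with ω hω
      have h1 : |ind (evD D1 D2 d) ω| = ind (evD D1 D2 d) ω := by
        rcases ind_cases (evD D1 D2 d) ω with h0 | h0 <;> rw [h0] <;> simp
      rw [Real.norm_eq_abs, abs_mul, abs_mul, abs_mul, h1, abs_of_pos hω.1, abs_of_nonneg (hk0 _)]

/-- Reweighting identities for the missingness-adjusted weights (with the convention
`p_d(X) · m_d(X) := 0` on `{p_d(X) = 0}`). -/
theorem statement_17
    [MeasurableSpace Ω] [m𝓧 : MeasurableSpace 𝓧]
    (P : Measure Ω) [IsProbabilityMeasure P]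
    (X : Ω → 𝓧) (hX : Measurable X)
    (Y0 Y2 D1 D2 S : Ω → ℝ)
    (hY0 : Measurable Y0) (hY2 : Measurable Y2)
    (hD1 : Measurable D1) (hD2 : Measurable D2) (hS : Measurable S)
    (hY0i : Integrable Y0 P) (hY2i : Integrable Y2 P)
    (hD1v : ∀ ω, D1 ω = 0 ∨ D1 ω = 1) (hD2v : ∀ ω, D2 ω = 0 ∨ D2 ω = 1)
    (hSv : ∀ ω, S ω = 0 ∨ S ω = 1)
    (d : ℝ × ℝ) (hd : d ∈ allPaths) (hPd : 0 < P (evD D1 D2 d))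
    (q : ℝ → 𝓧 → ℝ) (hMAR : MAR P X D1 D2 S Y0 Y2 q)
    (φ : 𝓧 → ℝ) (hφm : Measurable φ) (hφv : ∀ x, 0 < φ x ∧ φ x ≤ 1)
    (pd : 𝓧 → ℝ) (hpd : IsCondMeanGiven P X Set.univ (ind (evD D1 D2 d)) pd)
    (md : 𝓧 → ℝ) (hmd : IsCondMeanGiven P X (evD D1 D2 d) (fun ω => Y2 ω - Y0 ω) md)
    (hfin1 : Integrable
        (fun ω => S ω / φ (X ω) * ind (evD D1 D2 d) ω * (Y2 ω - Y0 ω)) P)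
    (hfin2 : Integrable (fun ω => S ω / φ (X ω) * ind (evD D1 D2 d) ω) P) :
    (∫ ω, S ω / φ (X ω) * ind (evD D1 D2 d) ω * (Y2 ω - Y0 ω) ∂P
        = ∫ ω, q d.2 (X ω) / φ (X ω)
            * (if pd (X ω) = 0 then 0 else pd (X ω) * md (X ω)) ∂P) ∧
    (∫ ω, S ω / φ (X ω) * ind (evD D1 D2 d) ω ∂P
        = ∫ ω, q d.2 (X ω) / φ (X ω) * pd (X ω) ∂P) := by
  have hd2 : d.2 ∈ ({0, 1} : Set ℝ) := by
    rcases hd with h | h | h | h <;> rw [h] <;> simp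
  have hA : MeasurableSet (evD D1 D2 d) :=
    (hD1 (measurableSet_singleton d.1)).inter (hD2 (measurableSet_singleton d.2))
  have hqm := (hMAR.1 d.2 hd2).1
  have hmdm := hmd.1
  have hu1 : ∀ ω, ind (Set.univ : Set Ω) ω = 1 := fun ω => by simp [ind]
  have e1 : (fun ω => S ω / φ (X ω) * ind (evD D1 D2 d) ω * (Y2 ω - Y0 ω)) =
      fun ω => ind (evD D1 D2 d) ω * S ω * id (Y2 ω - Y0 ω) * (φ (X ω))⁻¹ := by
    ext ω; simp only [id]; ring
  have e2 : (fun ω => S ω / φ (X ω) * ind (evD D1 D2 d) ω) =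
      fun ω => ind (evD D1 D2 d) ω * S ω * (fun _ : ℝ => (1 : ℝ)) (Y2 ω - Y0 ω) * (φ (X ω))⁻¹ := by
    ext ω; ring
  have hφi : ∀ x, 0 ≤ (φ x)⁻¹ := fun x => inv_nonneg.2 (hφv x).1.le
  rw [e1] at hfin1
  rw [e2] at hfin2
  rw [e1, e2]
  obtain ⟨a1, b1⟩ := mar_ext P X hX Y0 Y2 D1 D2 S hY0 hY2 hD1 hD2 d hd2 q hMAR
    (fun x => (φ x)⁻¹) hφm.inv hφi id measurable_id hSv hfin1
  obtain ⟨a2, b2⟩ := mar_ext P X hX Y0 Y2 D1 D2 S hY0 hY2 hD1 hD2 d hd2 q hMAR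
    (fun x => (φ x)⁻¹) hφm.inv hφi (fun _ => 1) measurable_const hSv hfin2
  have e3 : (fun ω => ind (evD D1 D2 d) ω * q d.2 (X ω) * id (Y2 ω - Y0 ω) * (φ (X ω))⁻¹) =
      fun ω => ind (evD D1 D2 d) ω * (fun ω => Y2 ω - Y0 ω) ω
        * (fun x => q d.2 x / φ x) (X ω) := by
    ext ω; simp only [id]; ring
  have e4 : (fun ω => ind (evD D1 D2 d) ω * q d.2 (X ω) * (fun _ : ℝ => (1 : ℝ)) (Y2 ω - Y0 ω)
        * (φ (X ω))⁻¹) =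
      fun ω => ind Set.univ ω * ind (evD D1 D2 d) ω * (fun x => q d.2 x / φ x) (X ω) := by
    ext ω; simp only [hu1]; ring
  rw [b1, b2]
  rw [e3] at a1 ⊢
  rw [e4] at a2 ⊢
  obtain ⟨a3, b3⟩ := condMean_ext P X hX _ hA _ md _ hmd (hqm.div hφm) a1
  obtain ⟨a4, b4⟩ := condMean_ext P X hX _ MeasurableSet.univ _ pd _ hpd (hqm.div hφm) a2
  have e5 : (fun ω => ind (evD D1 D2 d) ω * md (X ω) * (fun x => q d.2 x / φ x) (X ω)) =
      fun ω => ind Set.univ ω * ind (evD D1 D2 d) ω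
        * (fun x => md x * (q d.2 x / φ x)) (X ω) := by
    ext ω; simp only [hu1]; ring
  constructor
  · refine b3.trans ?_
    change Integrable (fun ω => ind (evD D1 D2 d) ω * md (X ω)
      * (fun x => q d.2 x / φ x) (X ω)) P at a3
    change ∫ ω, (fun ω => ind (evD D1 D2 d) ω * md (X ω)
      * (fun x => q d.2 x / φ x) (X ω)) ω ∂P = _
    rw [e5] at a3 ⊢
    obtain ⟨a5, b5⟩ := condMean_ext P X hX _ MeasurableSet.univ _ pd _ hpd
      (hmdm.mul (hqm.div hφm)) a3
    refine b5.trans ?_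
    congr 1
    ext ω
    simp only [hu1, Pi.mul_apply, Pi.div_apply]
    split_ifs with h
    · simp [h]
    · ring
  · refine b4.trans ?_
    congr 1
    ext ω
    simp only [hu1, Pi.mul_apply, Pi.div_apply]
    ring

end DIDMissing
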